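/- Let G be a finite simple graph whose vertex set carries a linear order. For every active set M ⊆ V(G) there exists exactly one v ∈ M with τ(v) = τ(M). -/

import Mathlib

/-!
Suppose two elements `u < v` of the active set `M` both satisfy `τ = τ(M) = t`. Since `max M < t`,
the predecessor `s` of `t` satisfies `v ≤ s`, so `u` and `v` both lie in `B_s` but not in `B_t`.
Hence `N(u)` agrees with `N_⊕(B)` above `t` for some set `B` of vertices below `u`, but not above
`s`, so the two differ at `t` and nowhere else above `s`; likewise `N(v)` and `N_⊕(C)` for some set
`C` of vertices below `v` (`exists_agree_except_tau`). Adding the two relations over `𝔽₂`, the discrepancies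
at `t` cancel, and `N(v)` agrees above `s` with `N_⊕(B ∆ {u} ∆ C)`. This set lies below `v`,
contradicting `v ∈ B_s`.
-/

open scoped Classical symmDiff

variable {V : Type}

/-- `N^{>t}(v)`: the neighbors of `v` that are greater than `t`. -/
def Ngt (G : SimpleGraph V) [LT V] (t v : V) : Set V := {w | G.Adj v w ∧ t < w}

/-- `N_⊕(M)`: the symmetric difference `⊕_{v ∈ M} N(v)` of the neighborhoods of the
vertices of `M`, i.e. the set of vertices adjacent to an odd number of elements of `M`. -/
noncomputable def NSym (G : SimpleGraph V) (M : Finset V) : Set V :=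
  {w | Odd (M.filter (fun v => G.Adj v w)).card}

/-- `N_⊕^{>t}(M) = N_⊕(M) ∩ V^{>t}`. -/
noncomputable def NSymGt (G : SimpleGraph V) [LT V] (t : V) (M : Finset V) : Set V :=
  NSym G M ∩ {w | t < w}

/-- The active basis `B_t`: the set of vertices `v ≤ t` such that `N^{>t}(v)` is not the
symmetric difference of the `N^{>t}`-neighborhoods of a set of vertices smaller than `v`. -/
noncomputable def Bset [Fintype V] [LinearOrder V] (G : SimpleGraph V) (t : V) : Finset V :=
  Finset.univ.filter (fun v => v ≤ t ∧
    ¬ ∃ B : Finset V, (∀ b ∈ B, b < v) ∧ Ngt G t v = NSymGt G t B)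

/-- `τ(v)`: the least `t ≥ v` with `v ∉ B_t`.  (It exists since `v ∉ B_{max V}`; the
maximum of `V` is inserted only to make the minimum well-defined.) -/
noncomputable def tau [Fintype V] [LinearOrder V] [Nonempty V] (G : SimpleGraph V) (v : V) :
    V :=
  (insert (Finset.univ.max' Finset.univ_nonempty)
    (Finset.univ.filter (fun t => v ≤ t ∧ v ∉ Bset G t))).min' (Finset.insert_nonempty _ _)

/-- `τ(M) = min_{v ∈ M} τ(v)` for a nonempty finset `M` (junk value for `M = ∅`). -/
noncomputable def tauSet [Fintype V] [LinearOrder V] [Nonempty V] (G : SimpleGraph V)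
    (M : Finset V) : V :=
  if h : M.Nonempty then (M.image (tau G)).min' (h.image _)
  else Finset.univ.max' Finset.univ_nonempty

/-- A nonempty set `M` is active if `max M < τ(M)`. -/
def ActiveSet [Fintype V] [LinearOrder V] [Nonempty V] (G : SimpleGraph V) (M : Finset V) :
    Prop :=
  ∃ h : M.Nonempty, M.max' h < tauSet G M

/-- Membership in the collection `Z`: the empty set, the singletons, and the active sets. -/
def Zmem [Fintype V] [LinearOrder V] [Nonempty V] (G : SimpleGraph V) (M : Finset V) : Prop :=
  M = ∅ ∨ (∃ v : V, M = {v}) ∨ ActiveSet G M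

/-- `F₀(v)`: the unique subset `B` of `B_{τ(v)}` with `N^{>τ(v)}(v) = N_⊕^{>τ(v)}(B)`. -/
noncomputable def F0 [Fintype V] [LinearOrder V] [Nonempty V] (G : SimpleGraph V) (v : V) :
    Finset V :=
  if h : ∃ B : Finset V, B ⊆ Bset G (tau G v) ∧ Ngt G (tau G v) v = NSymGt G (tau G v) B
  then h.choose else ∅

/-- The map `F`: `F(∅) = ∅` and `F(M) = M ∆ {v} ∆ F₀(v)` where `v` is the (for `M ∈ Z`,
unique) element of `M` with `τ(v) = τ(M)`. -/
noncomputable def Fmap [Fintype V] [LinearOrder V] [Nonempty V] (G : SimpleGraph V)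
    (M : Finset V) : Finset V :=
  if h : ∃ v ∈ M, tau G v = tauSet G M
  then (M ∆ {h.choose}) ∆ F0 G h.choose
  else ∅

lemma mem_NSym_symmDiff [DecidableEq V] (G : SimpleGraph V) (A B : Finset V) (w : V) :
    w ∈ NSym G (A ∆ B) ↔ ¬ (w ∈ NSym G A ↔ w ∈ NSym G B) := by
  have hcard : ∀ X Y : Finset V, (X ∆ Y).card + 2 * (X ∩ Y).card = X.card + Y.card := by
    intro X Y
    have h1 : (X ∆ Y).card = (X \ Y).card + (Y \ X).card := by
      rw [symmDiff_def, Finset.sup_eq_union, Finset.card_union_of_disjoint disjoint_sdiff_sdiff]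
    have h2 := Finset.card_sdiff_add_card_inter X Y
    have h3 := Finset.card_sdiff_add_card_inter Y X
    rw [Finset.inter_comm] at h3
    omega
  have hfilter : (A ∆ B).filter (fun v => G.Adj v w)
      = A.filter (fun v => G.Adj v w) ∆ B.filter (fun v => G.Adj v w) := by
    ext x
    simp only [Finset.mem_filter, Finset.mem_symmDiff]
    tauto
  have h := hcard (A.filter (fun v => G.Adj v w)) (B.filter (fun v => G.Adj v w))
  simp only [NSym, Set.mem_ofPred_eq, hfilter, Nat.odd_iff]
  omega

lemma mem_NSym_singleton (G : SimpleGraph V) (u w : V) :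
    w ∈ NSym G {u} ↔ G.Adj u w := by
  by_cases h : G.Adj u w <;> simp [NSym, Finset.filter_singleton, h]

lemma Ngt_eq_NSymGt_iff [LinearOrder V] (G : SimpleGraph V) (t v : V) (B : Finset V) :
    Ngt G t v = NSymGt G t B ↔ ∀ w, t < w → (G.Adj v w ↔ w ∈ NSym G B) := by
  simp only [Ngt, NSymGt, Set.ext_iff, Set.mem_ofPred_eq, Set.mem_inter_iff]
  exact forall_congr' fun w => by tauto

lemma tau_mem [Fintype V] [LinearOrder V] [Nonempty V] (G : SimpleGraph V) (v : V) :
    v ≤ tau G v ∧ v ∉ Bset G (tau G v) := by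
  have h := Finset.min'_mem (insert (Finset.univ.max' Finset.univ_nonempty)
    (Finset.univ.filter (fun t => v ≤ t ∧ v ∉ Bset G t))) (Finset.insert_nonempty _ _)
  change tau G v ∈ _ at h
  rcases Finset.mem_insert.1 h with h | h
  · -- Above the maximum of `V` every neighborhood is empty, so `B = ∅` witnesses `v ∉ B_{max V}`.
    rw [h]
    have hmax : ∀ w : V, w ≤ Finset.univ.max' Finset.univ_nonempty :=
      fun w => Finset.le_max' _ w (Finset.mem_univ w)
    refine ⟨hmax v, fun hv => (Finset.mem_filter.1 hv).2.2 ⟨∅, by simp, ?_⟩⟩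
    rw [Ngt_eq_NSymGt_iff]
    exact fun w hw => absurd (hmax w) (not_le.2 hw)
  · exact (Finset.mem_filter.1 h).2

lemma mem_Bset_of_lt_tau [Fintype V] [LinearOrder V] [Nonempty V] (G : SimpleGraph V) {v s : V}
    (hvs : v ≤ s) (hs : s < tau G v) : v ∈ Bset G s := by
  by_contra h
  exact absurd (Finset.min'_le _ s (Finset.mem_insert_of_mem
    (Finset.mem_filter.2 ⟨Finset.mem_univ s, hvs, h⟩))) (not_le.2 hs)

/-- If `s` is the predecessor of `τ(v)` and `v ≤ s`, then above `s` the neighborhood of `v` differs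
from a sum of neighborhoods of smaller vertices at `τ(v)` and nowhere else. -/
lemma exists_agree_except_tau [Fintype V] [LinearOrder V] [Nonempty V] (G : SimpleGraph V) {v s : V}
    (hvs : v ≤ s) (hs : s < tau G v) (hpred : ∀ w, s < w → tau G v ≤ w) :
    ∃ B : Finset V, (∀ b ∈ B, b < v) ∧
      ∀ w, s < w → ((G.Adj v w ↔ w ∈ NSym G B) ↔ w ≠ tau G v) := by
  obtain ⟨hle, hnot⟩ := tau_mem G v
  have hB : ∃ B : Finset V, (∀ b ∈ B, b < v) ∧ Ngt G (tau G v) v = NSymGt G (tau G v) B := by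
    by_contra h
    exact hnot (Finset.mem_filter.2 ⟨Finset.mem_univ v, hle, h⟩)
  obtain ⟨B, hBv, hB⟩ := hB
  rw [Ngt_eq_NSymGt_iff] at hB
  refine ⟨B, hBv, fun w hw => ⟨?_, fun hne => hB w (lt_of_le_of_ne (hpred w hw) hne.symm)⟩⟩
  rintro hagree rfl
  refine (Finset.mem_filter.1 (mem_Bset_of_lt_tau G hvs hs)).2.2 ⟨B, hBv, ?_⟩
  rw [Ngt_eq_NSymGt_iff]
  intro x hx
  rcases (hpred x hx).eq_or_lt with h | h
  · exact h ▸ hagree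
  · exact hB x h

lemma tau_ne_of_lt [Fintype V] [LinearOrder V] [Nonempty V] (G : SimpleGraph V) {u v : V}
    (huv : u < v) (hv : v < tau G v) : tau G u ≠ tau G v := by
  intro heq
  obtain ⟨s, hs, hmax⟩ := (Finset.univ.filter (fun x => x < tau G v)).exists_max_image id
    ⟨v, by simpa using hv⟩
  simp only [Finset.mem_filter, Finset.mem_univ, true_and, id] at hs hmax
  have hpred : ∀ w, s < w → tau G v ≤ w := fun w hw =>
    not_lt.1 fun h => absurd (hmax w h) (not_le.2 hw)
  have hvs := hmax v hv
  obtain ⟨C, hCv, hC⟩ := exists_agree_except_tau G hvs hs hpred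
  obtain ⟨B, hBu, hB⟩ := exists_agree_except_tau G (huv.le.trans hvs) (heq ▸ hs) (heq ▸ hpred)
  refine (Finset.mem_filter.1 (mem_Bset_of_lt_tau G hvs hs)).2.2 ⟨(B ∆ {u}) ∆ C, ?_, ?_⟩
  · intro b hb
    simp only [Finset.mem_symmDiff, Finset.mem_singleton] at hb
    rcases hb with ⟨⟨h, -⟩ | ⟨rfl, -⟩, -⟩ | ⟨h, -⟩
    · exact (hBu b h).trans huv
    · exact huv
    · exact hCv b h
  · rw [Ngt_eq_NSymGt_iff]
    intro w hw
    have h1 := hC w hw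
    have h2 := hB w hw
    rw [heq] at h2
    rw [mem_NSym_symmDiff, mem_NSym_symmDiff, mem_NSym_singleton]
    tauto

/-- Every active set `M` contains exactly one element `v` with `τ(v) = τ(M)`. -/
theorem existsUnique_tau_min [Fintype V] [LinearOrder V] [Nonempty V] (G : SimpleGraph V)
    (M : Finset V) (hM : ActiveSet G M) :
    ∃! v : V, v ∈ M ∧ tau G v = tauSet G M := by
  obtain ⟨hne, hlt⟩ := hM
  have hdef : tauSet G M = (M.image (tau G)).min' (hne.image _) := dif_pos hne
  have hM : ∀ v ∈ M, v < tauSet G M := fun v hv => (M.le_max' v hv).trans_lt hlt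
  obtain ⟨v, hv, hvt⟩ := Finset.mem_image.1 (Finset.min'_mem (M.image (tau G)) (hne.image _))
  rw [← hdef] at hvt
  refine ⟨v, ⟨hv, hvt⟩, fun u ⟨hu, hut⟩ => ?_⟩
  rcases lt_trichotomy u v with h | h | h
  · exact absurd (hut.trans hvt.symm) (tau_ne_of_lt G h (hvt ▸ hM v hv))
  · exact h
  · exact absurd (hvt.trans hut.symm) (tau_ne_of_lt G h (hut ▸ hM u hu))
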